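/- For all g, h ∈ W, the identity P_1(T_π(g) T_π^op(h)) = T_π[P_1(g †^{1,0} T_π^op(h))] + T_π^op[P_1(T_π(g) †^{0,1} h)] + T_π[P_1(g †^{1,1} h)] holds. -/

import Mathlib

open scoped BigOperators ENNReal

universe u

/-- Ambient data for (the weak*-dense part of) an amalgamated free product
`(A, τ) = *_{i ∈ I, B} (A_i, τ_i)` of finite von Neumann algebras `A_i` with normal faithful
normalized traces over a common von Neumann subalgebra `B`, together with the trace-preserving
conditional expectation `E : A → B` and the family of noncommutative `L_p`-(matrix) norms
(encoding Pisier's natural operator space structure on `L_p(A)`); the carrier `A` plays the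
role of the weak*-dense *-subalgebra `W`, which is linearly spanned by `B` together with the
reduced words in the centered parts of the `A_i`. -/
structure AmalgSetting : Type (u + 1) where
  I : Type u
  A : Type u
  [ringA : Ring A]
  [algA : Algebra ℂ A]
  [starA : StarRing A]
  [smodA : StarModule ℂ A]
  B : Subalgebra ℂ A
  Ai : I → Subalgebra ℂ A
  B_le : ∀ i, B ≤ Ai i
  star_B : ∀ x ∈ B, star x ∈ B
  star_Ai : ∀ i, ∀ x ∈ Ai i, star x ∈ Ai i
  E : A →ₗ[ℂ] A
  E_mem : ∀ x, E x ∈ B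
  E_fix : ∀ x ∈ B, E x = x
  E_bimod : ∀ b₁ ∈ B, ∀ b₂ ∈ B, ∀ x, E (b₁ * x * b₂) = b₁ * E x * b₂
  E_star : ∀ x, E (star x) = star (E x)
  tr : A →ₗ[ℂ] ℂ
  tr_one : tr 1 = 1
  tr_comm : ∀ x y, tr (x * y) = tr (y * x)
  tr_E : ∀ x, tr (E x) = tr x
  tr_pos : ∀ x, 0 ≤ (tr (star x * x)).re
  tr_faithful : ∀ x, tr (star x * x) = 0 → x = 0
  N : ℝ≥0∞ → (n : ℕ) → Matrix (Fin n) (Fin n) A → ℝ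
  N_nonneg : ∀ p n x, 0 ≤ N p n x
  N_add : ∀ p n x y, 1 ≤ p → N p n (x + y) ≤ N p n x + N p n y
  N_smul : ∀ p n (c : ℂ) x, N p n (c • x) = ‖c‖ * N p n x
  N_two : ∀ n (x : Matrix (Fin n) (Fin n) A),
    N 2 n x ^ 2 = ∑ k, ∑ l, (tr (star (x k l) * x k l)).re
  span_words : ∀ x : A, x ∈ Submodule.span ℂ
      ((B : Set A) ∪ {y | ∃ w : List I, w.Chain' (· ≠ ·) ∧ ∃ a : Fin w.length → A,
        (∀ j, a j ∈ Ai (w.get j) ∧ E (a j) = 0) ∧ y = (List.ofFn a).prod})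

attribute [instance] AmalgSetting.ringA AmalgSetting.algA AmalgSetting.starA AmalgSetting.smodA

namespace AmalgSetting

variable (S : AmalgSetting)

/-- The centered part `Å_i = {x ∈ A_i : E x = 0}` of `A_i`. -/
def cent (i : S.I) : Set S.A := {x | x ∈ S.Ai i ∧ S.E x = 0}

/-- `x` is an elementary tensor `a_1 ⊗ ⋯ ⊗ a_n` (realized in `A` as the product
`a_1 ⋯ a_n` of centered letters) along the word `w = (i_1, …, i_n)`. -/
def IsElemWord (w : List S.I) (x : S.A) : Prop :=
  ∃ a : Fin w.length → S.A, (∀ j, a j ∈ S.cent (w.get j)) ∧ x = (List.ofFn a).prod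

/-- A reduced word: adjacent indices are distinct. -/
def Reduced (w : List S.I) : Prop := w.Chain' (· ≠ ·)

/-- The summand `W_{(i_1,…,i_n)} = Å_{i_1} ⊗_B ⋯ ⊗_B Å_{i_n}` of `W` (and `W_{()} = B`). -/
def Wword : List S.I → Submodule ℂ S.A
  | [] => Subalgebra.toSubmodule S.B
  | w => Submodule.span ℂ {x | S.IsElemWord w x}

/-- The homogeneous part `W_n` of `W`. -/
def Wn (n : ℕ) : Submodule ℂ S.A :=
  ⨆ (w : List S.I) (_ : w.length = n ∧ S.Reduced w), S.Wword w

/-- The scalar `L_p`-norm. -/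
def nrm (p : ℝ≥0∞) (x : S.A) : ℝ := S.N p 1 (fun _ _ => x)

/-- `T` is completely bounded on `L_p(A)` with cb-norm at most `C`, i.e. all matrix
amplifications of `T` are bounded by `C` (so that the bounded linear extension of `T` to
`L_p(A)` is completely bounded with `‖T‖_{cb(L_p(A))} ≤ C`). -/
def IsCBWith (p : ℝ≥0∞) (T : S.A →ₗ[ℂ] S.A) (C : ℝ) : Prop :=
  ∀ (n : ℕ) (x : Matrix (Fin n) (Fin n) S.A), S.N p n (x.map T) ≤ C * S.N p n x

/-- `T` is completely bounded with constant `C` on the subspace `L_p(V)` of `L_p(A)`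
corresponding to a subalgebra `V ⊆ A` (e.g. `V = A_i`). -/
def IsCBOnWith (p : ℝ≥0∞) (V : Subalgebra ℂ S.A) (T : S.A →ₗ[ℂ] S.A) (C : ℝ) : Prop :=
  ∀ (n : ℕ) (x : Matrix (Fin n) (Fin n) S.A), (∀ k l, x k l ∈ V) →
    S.N p n (x.map T) ≤ C * S.N p n x

end AmalgSetting

namespace AmalgSetting

variable (S : AmalgSetting)

/-- The "opposite" companion `T^op(x) = (T(x*))*` of a map `T`. -/
def opConj (T : S.A →ₗ[ℂ] S.A) : S.A →ₗ[ℂ] S.A where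
  toFun x := star (T (star x))
  map_add' x y := by simp [star_add, map_add]
  map_smul' c x := by simp [star_smul, map_smul, smul_smul]

/-- A family `π = (π_i)` of *-representations `π_i : A_i → A_i` fixing `B` pointwise
and commuting with the conditional expectation `E`. -/
structure RepFamily where
  π : S.I → S.A →ₗ[ℂ] S.A
  mem : ∀ i, ∀ x ∈ S.Ai i, π i x ∈ S.Ai i
  map_mul : ∀ i, ∀ x ∈ S.Ai i, ∀ y ∈ S.Ai i, π i (x * y) = π i x * π i y
  map_star : ∀ i, ∀ x ∈ S.Ai i, π i (star x) = star (π i x)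
  fix_B : ∀ i, ∀ b ∈ S.B, π i b = b
  E_comm : ∀ i, ∀ x ∈ S.Ai i, S.E (π i x) = S.E x

/-- `T` is the map `T_π` acting on the first letter of reduced words:
`T_π(b) = b` for `b ∈ B`, and `T_π(a_1 ⊗ ⋯ ⊗ a_n) = π_{i_1}(a_1) ⊗ a_2 ⊗ ⋯ ⊗ a_n`. -/
def IsTpi (P : S.RepFamily) (T : S.A →ₗ[ℂ] S.A) : Prop :=
  (∀ b ∈ S.B, T b = b) ∧
  ∀ w : List S.I, S.Reduced w → ∀ a : Fin w.length → S.A,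
    (∀ j, a j ∈ S.cent (w.get j)) →
    T ((List.ofFn a).prod) =
      (List.ofFn fun j : Fin w.length =>
        if (j : ℕ) = 0 then P.π (w.get j) (a j) else a j).prod

/-- `P` is the projection `P_{≥2} = Id − P_0 − P_1` onto words of length at least `2`. -/
def IsPge2 (P : S.A →ₗ[ℂ] S.A) : Prop :=
  (∀ x ∈ S.Wn 0, P x = 0) ∧ (∀ x ∈ S.Wn 1, P x = 0) ∧
  ∀ n, 2 ≤ n → ∀ x ∈ S.Wn n, P x = x

/-- `P` is the natural projection `P_1 : W → W_1`. -/
def IsP1 (P : S.A →ₗ[ℂ] S.A) : Prop :=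
  (∀ x ∈ S.Wn 1, P x = x) ∧ ∀ n, n ≠ 1 → ∀ x ∈ S.Wn n, P x = 0

/-- `Q` is the family of natural projections of `W` onto the word components
`W_{(i_1,…,i_n)}` (with `Q_{()}` the projection onto `B`, i.e. `E`). -/
def IsWordProj (Q : List S.I → S.A →ₗ[ℂ] S.A) : Prop :=
  (∀ w, S.Reduced w → ∀ x ∈ S.Wword w, Q w x = x) ∧
  (∀ w w', S.Reduced w → S.Reduced w' → w ≠ w' → ∀ x ∈ S.Wword w', Q w x = 0) ∧
  (∀ w, ¬ S.Reduced w → Q w = 0) ∧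
  (∀ x, (Function.support fun w => Q w x).Finite) ∧
  (∀ x, ∑ᶠ w, Q w x = x)

end AmalgSetting

namespace AmalgSetting

open scoped Classical

variable (S : AmalgSetting)

/-- The paraproduct `x †^{1,0} y = xy − E_ε[H_ε^op(x H_ε^op(y))]`: in terms of the word
projections `Q`, averaging over the independent symmetric random signs `ε` keeps exactly
the components of `x · (component of y)` ending in the same algebra as that component of
`y`, so `x †^{1,0} y` collects the parts of `xy` that do **not** end in the same algebra
as `y`. -/
noncomputable def dag10 (Q : List S.I → S.A →ₗ[ℂ] S.A) (x y : S.A) : S.A :=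
  x * y - ∑ᶠ (v : List S.I), ∑ᶠ (w : List S.I),
    if w.getLast? = v.getLast? then Q w (x * Q v y) else 0

/-- The paraproduct `x †^{0,1} y = xy − E_ε[H_ε(H_ε(x) y)]`, collecting the parts of `xy`
that do not start in the same algebra as `x`. -/
noncomputable def dag01 (Q : List S.I → S.A →ₗ[ℂ] S.A) (x y : S.A) : S.A :=
  x * y - ∑ᶠ (u : List S.I), ∑ᶠ (w : List S.I),
    if w.head? = u.head? then Q w (Q u x * y) else 0

/-- The paraproduct `x †^{1,1} y = xy − x †^{1,0} y − x †^{0,1} y`. -/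
noncomputable def dag11 (Q : List S.I → S.A →ₗ[ℂ] S.A) (x y : S.A) : S.A :=
  x * y - S.dag10 Q x y - S.dag01 Q x y

end AmalgSetting

/-!
Split `g` and `h` into their components along reduced words `u` and `v`. In a product of two such
components, the end of `u` cancels against the beginning of `v`, and then the two adjacent letters
either stay apart or merge into one letter of the same algebra; so only words arising in this way,
the *fusions* of `u` and `v`, occur. Comparing lengths settles everything:

* if `v` is shorter than `u`, every fusion keeps the first letter of `u`, which gives
  `T_π(gh) = T_π(g) h` and `P_1(g †^{0,1} h) = 0`, while a fusion of length one does not end in the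
  same letter as `v`, so `P_1(g †^{1,0} h) = P_1(gh)`; the case where `u` is shorter is symmetric;
* if `u` and `v` have equal length, `P_1` kills the first two paraproducts and sees a fusion only if
  everything between the first letter of `u` and the last letter of `v` cancels completely; there
  multiplicativity of `π` gives `P_1(T_π(g) T_π^op(h)) = P_1(T_π(gh))`.

In each case exactly one of the three paraproducts contributes, and `P_1` commutes with `T_π` and
`T_π^op`.
-/

namespace AmalgSetting

section Fusion

variable {α : Type*} {u v w : List α} {i j : α}

/-- `w` is a reduced word occurring in the product of the words `u` and `v`: the end of `u`
cancels against the beginning of `v`, and then either the remaining words are concatenated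
(`m = []`) or their two adjacent letters, lying in the same algebra, merge into one (`m = [i]`). -/
def IsFusion (u v w : List α) : Prop :=
  w.IsChain (· ≠ ·) ∧ ∃ p m q r : List α,
    m.length ≤ 1 ∧ u = p ++ m ++ r ∧ v = r.reverse ++ m ++ q ∧ w = p ++ m ++ q

theorem isChain_ne_reverse (h : u.IsChain (· ≠ ·)) : u.reverse.IsChain (· ≠ ·) :=
  List.isChain_reverse.2 (h.imp fun _ _ => Ne.symm)

theorem IsFusion.of_isChain_append (h : (u ++ v).IsChain (· ≠ ·)) : IsFusion u v (u ++ v) :=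
  ⟨h, u, [], v, [], by simp⟩

theorem IsFusion.of_merge (hu : (u ++ [i]).IsChain (· ≠ ·)) (hv : (i :: v).IsChain (· ≠ ·)) :
    IsFusion (u ++ [i]) (i :: v) (u ++ i :: v) :=
  ⟨List.isChain_split.2 ⟨hu, hv⟩, u, [i], v, [], by simp⟩

theorem IsFusion.cancel (h : IsFusion u v w) : IsFusion (u ++ [i]) (i :: v) w := by
  obtain ⟨hw, p, m, q, r, hm, rfl, rfl, rfl⟩ := h
  exact ⟨hw, p, m, q, r ++ [i], hm, by simp⟩

theorem IsFusion.reverse (h : IsFusion u v w) : IsFusion v.reverse u.reverse w.reverse := by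
  obtain ⟨hw, p, m, q, r, hm, rfl, rfl, rfl⟩ := h
  exact ⟨isChain_ne_reverse hw, q.reverse, m.reverse, p.reverse, r, by simp [hm]⟩

theorem IsFusion.head?_eq (h : IsFusion u v w) (hl : v.length ≤ u.length) (hw : w ≠ []) :
    w.head? = u.head? := by
  obtain ⟨-, p, m, q, r, -, rfl, rfl, rfl⟩ := h
  have hpm : p ++ m ≠ [] := by
    intro hnil
    obtain ⟨rfl, rfl⟩ := List.append_eq_nil_iff.1 hnil
    have hq : q = [] := List.length_eq_zero_iff.1 (by simpa using hl)
    exact hw (by simp [hq])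
  rw [List.head?_append_of_ne_nil _ hpm, List.head?_append_of_ne_nil _ hpm]

theorem IsFusion.getLast?_eq (h : IsFusion u v w) (hl : u.length ≤ v.length) (hw : w ≠ []) :
    w.getLast? = v.getLast? := by
  simpa using h.reverse.head?_eq (by simpa using hl) (by simpa using hw)

theorem IsFusion.isChain_cons (h : IsFusion u v w) (hl : v.length ≤ u.length)
    (hu : (j :: u).IsChain (· ≠ ·)) : (j :: w).IsChain (· ≠ ·) := by
  refine List.isChain_cons.2 ⟨fun k hk => ?_, h.1⟩
  have hw : w ≠ [] := by rintro rfl; simp at hk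
  exact (List.isChain_cons.1 hu).1 k (h.head?_eq hl hw ▸ hk)

theorem IsFusion.isChain_concat (h : IsFusion u v w) (hl : u.length ≤ v.length)
    (hv : (v ++ [j]).IsChain (· ≠ ·)) : (w ++ [j]).IsChain (· ≠ ·) := by
  have hrev := h.reverse.isChain_cons (j := j) (by simpa using hl)
    (by simpa using isChain_ne_reverse hv)
  simpa using isChain_ne_reverse hrev

theorem IsFusion.eq_nil_or_isChain (h : IsFusion u v w) (hl : u.length = v.length)
    (hu : (i :: u).IsChain (· ≠ ·)) (hv : (v ++ [j]).IsChain (· ≠ ·)) :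
    w = [] ∨ (i :: (w ++ [j])).IsChain (· ≠ ·) := by
  refine or_iff_not_imp_left.2 fun hw => ?_
  exact List.IsChain.append_overlap (l₁ := [i]) (h.isChain_cons hl.ge hu)
    (h.isChain_concat hl.le hv) hw

theorem IsFusion.getLast?_ne (h : IsFusion u v [j]) (hu : u.IsChain (· ≠ ·))
    (hl : v.length < u.length) : v.getLast? ≠ some j := by
  obtain ⟨-, p, m, q, r, -, rfl, rfl, hj⟩ := h
  have hjl := congrArg List.length hj
  simp only [List.length_append, List.length_reverse, List.length_cons, List.length_nil] at hl hjl
  obtain rfl : m = [] := List.length_eq_zero_iff.1 (by omega)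
  obtain rfl : q = [] := List.length_eq_zero_iff.1 (by omega)
  obtain rfl : p = [j] := by simpa using hj.symm
  have hjr := (List.isChain_cons.1 hu).1
  simpa using fun hr => hjr j hr rfl

theorem IsFusion.head?_ne (h : IsFusion u v [j]) (hv : v.IsChain (· ≠ ·))
    (hl : u.length < v.length) : u.head? ≠ some j := by
  have hrev : IsFusion v.reverse u.reverse [j] := h.reverse
  simpa only [List.getLast?_reverse] using
    hrev.getLast?_ne (isChain_ne_reverse hv) (by simpa using hl)

end Fusion

section Words

variable {S : AmalgSetting} {i : S.I} {u v w : List S.I}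

/-- The centered part `Å_i` as a submodule; its carrier is `cent i`. -/
def centered (S : AmalgSetting) (i : S.I) : Submodule ℂ S.A :=
  Subalgebra.toSubmodule (S.Ai i) ⊓ LinearMap.ker S.E

theorem centered_le (i : S.I) : S.centered i ≤ Subalgebra.toSubmodule (S.Ai i) := inf_le_left

theorem Ai_le (i : S.I) :
    Subalgebra.toSubmodule (S.Ai i) ≤ S.Wword [] ⊔ S.centered i := by
  intro x hx
  have hcentered : x - S.E x ∈ S.centered i :=
    ⟨(S.Ai i).sub_mem hx (S.B_le i (S.E_mem x)), by simp [S.E_fix _ (S.E_mem x)]⟩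
  exact Submodule.mem_sup.2 ⟨_, S.E_mem x, _, hcentered, add_sub_cancel _ _⟩

theorem Wword_nil_mul_centered (i : S.I) : S.Wword [] * S.centered i = S.centered i := by
  refine le_antisymm (Submodule.mul_le.2 fun b hb c hc =>
    ⟨(S.Ai i).mul_mem (S.B_le i hb) hc.1, ?_⟩) fun c hc => ?_
  · have hE := S.E_bimod b hb 1 S.B.one_mem c
    rwa [mul_one, mul_one, hc.2, mul_zero] at hE
  · simpa using Submodule.mul_mem_mul (M := S.Wword []) S.B.one_mem hc

theorem centered_mul_Wword_nil (i : S.I) : S.centered i * S.Wword [] = S.centered i := by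
  refine le_antisymm (Submodule.mul_le.2 fun c hc b hb =>
    ⟨(S.Ai i).mul_mem hc.1 (S.B_le i hb), ?_⟩) fun c hc => ?_
  · have hE := S.E_bimod 1 S.B.one_mem b hb c
    rwa [one_mul, one_mul, hc.2, zero_mul] at hE
  · simpa using Submodule.mul_mem_mul (N := S.Wword []) hc S.B.one_mem

theorem star_mem_centered {c : S.A} (hc : c ∈ S.centered i) : star c ∈ S.centered i :=
  ⟨S.star_Ai i c hc.1, (S.E_star c).trans (by rw [hc.2, star_zero])⟩

theorem IsElemWord.cons {a x : S.A} (ha : a ∈ S.centered i) (hx : S.IsElemWord w x) :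
    S.IsElemWord (i :: w) (a * x) := by
  obtain ⟨f, hf, rfl⟩ := hx
  exact ⟨Fin.cons a f, Fin.cases ha hf, by simp [List.ofFn_succ]⟩

open scoped Pointwise in
theorem setOf_isElemWord_cons (i : S.I) (w : List S.I) :
    {x | S.IsElemWord (i :: w) x} = (S.centered i : Set S.A) * {x | S.IsElemWord w x} := by
  ext x
  refine ⟨?_, ?_⟩
  · rintro ⟨f, hf, rfl⟩
    exact ⟨f 0, hf 0, _, ⟨fun k => f k.succ, fun k => hf k.succ, rfl⟩, by simp [List.ofFn_succ]⟩
  · rintro ⟨a, ha, y, hy, rfl⟩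
    exact hy.cons ha

theorem setOf_isElemWord_nil : {x | S.IsElemWord [] x} = {1} := by
  ext x
  simp [IsElemWord]

theorem Wword_cons (i : S.I) (w : List S.I) :
    S.Wword (i :: w) = S.centered i * S.Wword w := by
  change Submodule.span ℂ _ = _
  rw [setOf_isElemWord_cons, ← Submodule.span_mul_span, Submodule.span_eq]
  cases w with
  | nil => rw [setOf_isElemWord_nil, ← Submodule.one_eq_span, mul_one, centered_mul_Wword_nil]
  | cons j w => rfl

theorem IsElemWord.mem_Wword {x : S.A} (hx : S.IsElemWord w x) : x ∈ S.Wword w := by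
  cases w with
  | nil =>
    obtain rfl : x = 1 := setOf_isElemWord_nil.subset hx
    exact S.B.one_mem
  | cons i w => exact Submodule.subset_span hx

theorem Wword_singleton (i : S.I) : S.Wword [i] = S.centered i := by
  rw [Wword_cons, centered_mul_Wword_nil]

theorem Wword_nil_mul_Wword (w : List S.I) : S.Wword [] * S.Wword w = S.Wword w := by
  cases w with
  | nil => exact S.B.isIdempotentElem_toSubmodule.eq
  | cons i w => rw [Wword_cons, ← mul_assoc, Wword_nil_mul_centered]

theorem Wword_append (u v : List S.I) : S.Wword (u ++ v) = S.Wword u * S.Wword v := by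
  induction u with
  | nil => rw [List.nil_append, Wword_nil_mul_Wword]
  | cons i u ih => rw [List.cons_append, Wword_cons, ih, Wword_cons, mul_assoc]

theorem star_mem_Wword_reverse {x : S.A} (hx : x ∈ S.Wword w) : star x ∈ S.Wword w.reverse := by
  induction w generalizing x with
  | nil => exact S.star_B x hx
  | cons i w ih =>
    rw [Wword_cons] at hx
    rw [List.reverse_cons, Wword_append, Wword_singleton]
    refine Submodule.mul_induction_on hx (fun a ha y hy => ?_) fun y z hy hz => ?_
    · rw [star_mul]
      exact Submodule.mul_mem_mul (ih hy) (star_mem_centered ha)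
    · rw [star_add]
      exact add_mem hy hz

theorem iSup_Wword_eq_top : ⨆ (w) (_ : S.Reduced w), S.Wword w = ⊤ := by
  refine top_unique fun x _ => (Submodule.span_le.2 ?_) (S.span_words x)
  rintro y (hy | ⟨w, hw, a, ha, rfl⟩)
  · exact Submodule.mem_iSup_of_mem [] (Submodule.mem_iSup_of_mem List.isChain_nil hy)
  · refine Submodule.mem_iSup_of_mem w (Submodule.mem_iSup_of_mem hw ?_)
    exact IsElemWord.mem_Wword ⟨a, ha, rfl⟩

theorem centered_mul_centered_le (i : S.I) :
    S.centered i * S.centered i ≤ S.Wword [] ⊔ S.centered i :=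
  (mul_le_mul' (centered_le i) (centered_le i)).trans
    ((S.Ai i).isIdempotentElem_toSubmodule.eq.trans_le (Ai_le i))

theorem Wword_mul_Wword_le (hu : S.Reduced u) (hv : S.Reduced v) :
    S.Wword u * S.Wword v ≤ ⨆ (w) (_ : IsFusion u v w), S.Wword w := by
  have of_append {u v : List S.I} (h : S.Reduced (u ++ v)) :
      S.Wword u * S.Wword v ≤ ⨆ (w) (_ : IsFusion u v w), S.Wword w :=
    (Wword_append u v).ge.trans (le_iSup₂_of_le _ (.of_isChain_append h) le_rfl)
  induction u using List.reverseRecOn generalizing v with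
  | nil => exact of_append hv
  | append_singleton u i ih =>
  rcases v with _ | ⟨k, v⟩
  · exact of_append (by simpa using hu)
  by_cases hik : i = k
  · subst hik
    calc S.Wword (u ++ [i]) * S.Wword (i :: v)
        = S.Wword u * (S.centered i * S.centered i) * S.Wword v := by
          rw [Wword_append, Wword_singleton, Wword_cons]
          simp only [mul_assoc]
      _ ≤ S.Wword u * (S.Wword [] ⊔ S.centered i) * S.Wword v :=
          mul_le_mul' (mul_le_mul' le_rfl (centered_mul_centered_le i)) le_rfl
      _ = S.Wword u * S.Wword v ⊔ S.Wword (u ++ i :: v) := by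
          simp only [Submodule.mul_sup, Submodule.sup_mul, ← Wword_append, mul_assoc, ← Wword_cons,
            List.append_nil]
      _ ≤ ⨆ (w) (_ : IsFusion (u ++ [i]) (i :: v) w), S.Wword w :=
          sup_le ((ih (List.isChain_append.1 hu).1 (List.isChain_cons.1 hv).2).trans
              (iSup₂_mono' fun w hw => ⟨w, hw.cancel, le_rfl⟩))
            (le_iSup₂_of_le _ (.of_merge hu hv) le_rfl)
  · exact of_append (List.isChain_append.2 ⟨hu, hv, by simpa using hik⟩)

end Words

section LinearMaps

variable {S : AmalgSetting} {M : Type*} [AddCommMonoid M] [Module ℂ M] {u v : List S.I}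

theorem ext_Wword {f f' : S.A →ₗ[ℂ] M}
    (h : ∀ w, S.Reduced w → ∀ x ∈ S.Wword w, f x = f' x) : f = f' := by
  have hle : ⨆ (w) (_ : S.Reduced w), S.Wword w ≤ LinearMap.eqLocus f f' := iSup₂_le h
  rw [iSup_Wword_eq_top] at hle
  exact LinearMap.ext fun x => hle Submodule.mem_top

theorem ext_Wword₂ {f f' : S.A →ₗ[ℂ] S.A →ₗ[ℂ] M}
    (h : ∀ u v, S.Reduced u → S.Reduced v →
      ∀ x ∈ S.Wword u, ∀ y ∈ S.Wword v, f x y = f' x y) : f = f' :=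
  ext_Wword fun u hu x hx => ext_Wword fun v hv y hy => h u v hu hv x hx y hy

theorem map_mul_eq_of_isFusion {f f' : S.A →ₗ[ℂ] M} (hu : S.Reduced u) (hv : S.Reduced v)
    (h : ∀ w, IsFusion u v w → ∀ z ∈ S.Wword w, f z = f' z) {x y : S.A}
    (hx : x ∈ S.Wword u) (hy : y ∈ S.Wword v) : f (x * y) = f' (x * y) := by
  have hle : S.Wword u * S.Wword v ≤ LinearMap.eqLocus f f' :=
    (Wword_mul_Wword_le hu hv).trans (iSup₂_le h)
  exact hle (Submodule.mul_mem_mul hx hy)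

end LinearMaps

section LengthOne

variable {S : AmalgSetting} {P1 : S.A →ₗ[ℂ] S.A} {w : List S.I} {x : S.A}

theorem Wword_le_Wn (hw : S.Reduced w) : S.Wword w ≤ S.Wn w.length :=
  le_iSup₂_of_le w ⟨rfl, hw⟩ le_rfl

theorem IsP1.apply_of_length_eq_one (hP : S.IsP1 P1) (hw : S.Reduced w) (hl : w.length = 1)
    (hx : x ∈ S.Wword w) : P1 x = x :=
  hP.1 x (hl ▸ Wword_le_Wn hw hx)

theorem IsP1.apply_of_length_ne_one (hP : S.IsP1 P1) (hw : S.Reduced w) (hl : w.length ≠ 1)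
    (hx : x ∈ S.Wword w) : P1 x = 0 :=
  hP.2 _ hl x (Wword_le_Wn hw hx)

theorem IsP1.apply_comm (hP : S.IsP1 P1) {f : S.A →ₗ[ℂ] S.A}
    (hf : ∀ w, S.Reduced w → ∀ x ∈ S.Wword w, f x ∈ S.Wword w) (x : S.A) :
    P1 (f x) = f (P1 x) := by
  refine LinearMap.congr_fun (f := P1 ∘ₗ f) (g := f ∘ₗ P1) (ext_Wword fun w hw x hx => ?_) x
  simp only [LinearMap.comp_apply]
  by_cases hl : w.length = 1
  · rw [hP.apply_of_length_eq_one hw hl (hf w hw x hx), hP.apply_of_length_eq_one hw hl hx]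
  · rw [hP.apply_of_length_ne_one hw hl (hf w hw x hx), hP.apply_of_length_ne_one hw hl hx,
      map_zero]

end LengthOne

section FirstLetter

variable {S : AmalgSetting} {P : S.RepFamily} {T : S.A →ₗ[ℂ] S.A} {i k : S.I}
  {u v w : List S.I} {a b c x y z : S.A}

theorem RepFamily.map_mem_centered (P : S.RepFamily) (ha : a ∈ S.centered i) :
    P.π i a ∈ S.centered i :=
  ⟨P.mem i a ha.1, (P.E_comm i a ha.1).trans ha.2⟩

theorem RepFamily.map_mul_Wword_nil (P : S.RepFamily) (ha : a ∈ S.Ai i) (hb : b ∈ S.Wword []) :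
    P.π i (a * b) = P.π i a * b := by
  rw [P.map_mul i a ha b (S.B_le i hb), P.fix_B i b hb]

theorem opConj_apply (T : S.A →ₗ[ℂ] S.A) (x : S.A) : S.opConj T x = star (T (star x)) := rfl

theorem IsTpi.apply_mul_of_isElemWord (hT : S.IsTpi P T) (hw : S.Reduced (i :: w))
    (ha : a ∈ S.centered i) (hx : S.IsElemWord w x) : T (a * x) = P.π i a * x := by
  obtain ⟨f, hf, rfl⟩ := hx
  have hcons := hT.2 (i :: w) hw (Fin.cons a f) (Fin.cases ha hf)
  simpa [List.ofFn_succ] using hcons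

theorem IsTpi.apply_mul (hT : S.IsTpi P T) (hw : S.Reduced (i :: w)) (ha : a ∈ S.centered i)
    (hx : x ∈ S.Wword w) : T (a * x) = P.π i a * x := by
  cases w with
  | nil =>
    have hax : a * x ∈ S.centered i :=
      (centered_mul_Wword_nil i).le (Submodule.mul_mem_mul ha hx)
    have hone : S.IsElemWord [] 1 := setOf_isElemWord_nil.superset rfl
    simpa [P.map_mul_Wword_nil ha.1 hx] using hT.apply_mul_of_isElemWord hw hax hone
  | cons j w =>
    exact LinearMap.eqOn_span (f := T ∘ₗ LinearMap.mulLeft ℂ a) (g := LinearMap.mulLeft ℂ (P.π i a))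
      (fun y hy => hT.apply_mul_of_isElemWord hw ha hy) hx

theorem IsTpi.apply_of_mem_Ai (hT : S.IsTpi P T) (hz : z ∈ S.Ai i) : T z = P.π i z := by
  obtain ⟨b, hb, c, hc, rfl⟩ := Submodule.mem_sup.1 (Ai_le i hz)
  have hTc : T c = P.π i c := by
    simpa using hT.apply_mul (List.isChain_singleton i) hc (w := []) S.B.one_mem
  rw [map_add, map_add, hT.1 b hb, P.fix_B i b hb, hTc]

theorem IsTpi.mem_Wword (hT : S.IsTpi P T) (hw : S.Reduced w) (hx : x ∈ S.Wword w) :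
    T x ∈ S.Wword w := by
  cases w with
  | nil => rwa [hT.1 x hx]
  | cons i w =>
    rw [Wword_cons] at hx ⊢
    refine Submodule.mul_induction_on hx (fun a ha y hy => ?_) fun y z hy hz => ?_
    · rw [hT.apply_mul hw ha hy]
      exact Submodule.mul_mem_mul (P.map_mem_centered ha) hy
    · rw [map_add]
      exact add_mem hy hz

theorem IsTpi.opConj_mem_Wword (hT : S.IsTpi P T) (hw : S.Reduced w) (hx : x ∈ S.Wword w) :
    S.opConj T x ∈ S.Wword w := by
  simpa [opConj_apply] using
    star_mem_Wword_reverse (hT.mem_Wword (isChain_ne_reverse hw) (star_mem_Wword_reverse hx))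

theorem IsTpi.opConj_mul (hT : S.IsTpi P T) (hw : S.Reduced (w ++ [k])) (hx : x ∈ S.Wword w)
    (hc : c ∈ S.centered k) : S.opConj T (x * c) = x * P.π k c := by
  have hw' : S.Reduced (k :: w.reverse) := List.reverse_concat ▸ isChain_ne_reverse hw
  rw [opConj_apply, star_mul, hT.apply_mul hw' (star_mem_centered hc) (star_mem_Wword_reverse hx),
    P.map_star k c hc.1, star_mul, star_star, star_star]

theorem IsTpi.apply_mul_of_length_lt (hT : S.IsTpi P T) (hu : S.Reduced u) (hv : S.Reduced v)
    (hl : v.length < u.length) (hx : x ∈ S.Wword u) (hy : y ∈ S.Wword v) :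
    T (x * y) = T x * y := by
  rcases u with _ | ⟨i, u⟩
  · simp at hl
  rw [Wword_cons] at hx
  refine Submodule.mul_induction_on hx (fun a ha x' hx' => ?_) fun x x' h h' => ?_
  · have hfusion : T (a * (x' * y)) = P.π i a * (x' * y) :=
      map_mul_eq_of_isFusion (f := T ∘ₗ LinearMap.mulLeft ℂ a)
        (f' := LinearMap.mulLeft ℂ (P.π i a)) (List.isChain_cons.1 hu).2 hv
        (fun w hw z hz => hT.apply_mul (hw.isChain_cons (Nat.le_of_lt_succ hl) hu) ha hz) hx' hy
    rw [hT.apply_mul hu ha hx', mul_assoc, hfusion, mul_assoc]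
  · rw [add_mul, map_add, h, h', map_add, add_mul]

theorem IsTpi.opConj_mul_of_length_lt (hT : S.IsTpi P T) (hu : S.Reduced u) (hv : S.Reduced v)
    (hl : u.length < v.length) (hx : x ∈ S.Wword u) (hy : y ∈ S.Wword v) :
    S.opConj T (x * y) = x * S.opConj T y := by
  rw [opConj_apply, star_mul, hT.apply_mul_of_length_lt (isChain_ne_reverse hv)
    (isChain_ne_reverse hu) (by simpa using hl) (star_mem_Wword_reverse hy)
    (star_mem_Wword_reverse hx), star_mul, star_star, opConj_apply]

theorem IsTpi.P1_map_mul_map (hT : S.IsTpi P T) {P1 : S.A →ₗ[ℂ] S.A} (hP : S.IsP1 P1)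
    (hw : w = [] ∨ S.Reduced (i :: (w ++ [k]))) (ha : a ∈ S.centered i) (hc : c ∈ S.centered k)
    (hz : z ∈ S.Wword w) : P1 (P.π i a * z * P.π k c) = P1 (T (a * z * c)) := by
  have mem_Wword {a c : S.A} (ha : a ∈ S.centered i) (hc : c ∈ S.centered k) :
      a * z * c ∈ S.Wword (i :: (w ++ [k])) := by
    rw [Wword_cons, Wword_append, Wword_singleton, mul_assoc]
    exact Submodule.mul_mem_mul ha (Submodule.mul_mem_mul hz hc)
  by_cases hr : S.Reduced (i :: (w ++ [k]))
  · have hl : (i :: (w ++ [k])).length ≠ 1 := by simp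
    rw [hP.apply_of_length_ne_one hr hl
        (mem_Wword (P.map_mem_centered ha) (P.map_mem_centered hc)),
      hP.apply_of_length_ne_one hr hl (hT.mem_Wword hr (mem_Wword ha hc))]
  · obtain rfl : w = [] := hw.resolve_right hr
    obtain rfl : i = k := by
      by_contra hik
      exact hr (List.isChain_pair.2 hik)
    have hazAi : a * z ∈ S.Ai i := (S.Ai i).mul_mem ha.1 (S.B_le i hz)
    rw [hT.apply_of_mem_Ai ((S.Ai i).mul_mem hazAi hc.1), P.map_mul i _ hazAi c hc.1,
      P.map_mul_Wword_nil ha.1 hz]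

theorem IsTpi.P1_mul_of_length_eq (hT : S.IsTpi P T) {P1 : S.A →ₗ[ℂ] S.A} (hP : S.IsP1 P1)
    (hu : S.Reduced u) (hv : S.Reduced v) (hl : u.length = v.length)
    (hx : x ∈ S.Wword u) (hy : y ∈ S.Wword v) :
    P1 (T x * S.opConj T y) = P1 (T (x * y)) := by
  rcases u with _ | ⟨i, u⟩
  · obtain rfl : v = [] := List.length_eq_zero_iff.1 hl.symm
    rw [hT.1 x hx, hT.1 (x * y) (S.B.mul_mem hx hy), opConj_apply, hT.1 _ (S.star_B y hy),
      star_star]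
  rcases List.eq_nil_or_concat' v with rfl | ⟨v, k, rfl⟩
  · simp at hl
  rw [Wword_cons] at hx
  rw [Wword_append, Wword_singleton] at hy
  have hlen : u.length = v.length := by simpa using hl
  refine Submodule.mul_induction_on hx (fun a ha x' hx' => ?_) fun x x' h h' => ?_
  · refine Submodule.mul_induction_on hy (fun y' hy' c hc => ?_) fun y y' h h' => ?_
    · have hfusion : P1 (P.π i a * (x' * y') * P.π k c) = P1 (T (a * (x' * y') * c)) :=
        map_mul_eq_of_isFusion
          (f := P1 ∘ₗ LinearMap.mulRight ℂ (P.π k c) ∘ₗ LinearMap.mulLeft ℂ (P.π i a))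
          (f' := P1 ∘ₗ T ∘ₗ LinearMap.mulRight ℂ c ∘ₗ LinearMap.mulLeft ℂ a)
          (List.isChain_cons.1 hu).2 (List.isChain_append.1 hv).1
          (fun w hw z hz => hT.P1_map_mul_map hP (hw.eq_nil_or_isChain hlen hu hv) ha hc hz) hx' hy'
      simpa only [hT.apply_mul hu ha hx', hT.opConj_mul hv hy' hc, mul_assoc] using hfusion
    · simp only [map_add, mul_add, h, h']
  · simp only [map_add, add_mul, h, h']

end FirstLetter

section Paraproducts

variable {S : AmalgSetting} {Q : List S.I → S.A →ₗ[ℂ] S.A} {P1 : S.A →ₗ[ℂ] S.A}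
  {u v w : List S.I} {x y : S.A} {p : List S.I → Prop}

/-- The operator acting as `f w` on each word component `Wword w`, as a linear function of `f`. -/
noncomputable def wordMap (hQ : S.IsWordProj Q) :
    (List S.I → Module.End ℂ S.A) →ₗ[ℂ] Module.End ℂ S.A :=
  have finite_support (f : List S.I → Module.End ℂ S.A) (x : S.A) :
      (Function.support fun w => f w (Q w x)).Finite :=
    (hQ.2.2.2.1 x).subset fun w => mt fun h => by simp [h]
  LinearMap.mk₂ ℂ (fun f x => ∑ᶠ w, f w (Q w x))
    (fun f g x => finsum_add_distrib (finite_support f x) (finite_support g x))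
    (fun c f x => (smul_finsum c _).symm)
    (fun f x y => by
      simp only [map_add, finsum_add_distrib (finite_support f x) (finite_support f y)])
    (fun c f x => by simp only [map_smul, smul_finsum])

theorem wordMap_apply (hQ : S.IsWordProj Q) (f : List S.I → Module.End ℂ S.A) (x : S.A) :
    wordMap hQ f x = ∑ᶠ w, f w (Q w x) := rfl

theorem wordMap_apply_of_mem (hQ : S.IsWordProj Q) (f : List S.I → Module.End ℂ S.A)
    (hw : S.Reduced w) (hx : x ∈ S.Wword w) : wordMap hQ f x = f w x := by
  rw [wordMap_apply, finsum_eq_single _ w fun v hvw => ?_, hQ.1 w hw x hx]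
  by_cases hv : S.Reduced v
  · rw [hQ.2.1 v w hv hw hvw x hx, map_zero]
  · rw [hQ.2.2.1 v hv, LinearMap.zero_apply, map_zero]

open Classical in
/-- The projection onto the sum of the word components `Wword w` with `p w`. -/
noncomputable def wordFilter (hQ : S.IsWordProj Q) (p : List S.I → Prop) : Module.End ℂ S.A :=
  wordMap hQ fun w => if p w then LinearMap.id else 0

theorem wordFilter_apply (hQ : S.IsWordProj Q) (p : List S.I → Prop)
    [DecidablePred p] (x : S.A) :
    wordFilter hQ p x = ∑ᶠ w, if p w then Q w x else 0 := by
  refine (wordMap_apply hQ _ x).trans (finsum_congr fun w => ?_)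
  split_ifs <;> rfl

theorem wordFilter_apply_of_pos (hQ : S.IsWordProj Q) (hw : S.Reduced w) (hx : x ∈ S.Wword w)
    (h : p w) : wordFilter hQ p x = x := by
  rw [wordFilter, wordMap_apply_of_mem hQ _ hw hx, if_pos h, LinearMap.id_apply]

theorem wordFilter_apply_of_neg (hQ : S.IsWordProj Q) (hw : S.Reduced w) (hx : x ∈ S.Wword w)
    (h : ¬ p w) : wordFilter hQ p x = 0 := by
  rw [wordFilter, wordMap_apply_of_mem hQ _ hw hx, if_neg h, LinearMap.zero_apply]

theorem IsP1.apply_wordFilter_mul (hP : S.IsP1 P1) (hQ : S.IsWordProj Q) (hu : S.Reduced u)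
    (hv : S.Reduced v) (hp : ∀ i, IsFusion u v [i] → p [i]) (hx : x ∈ S.Wword u)
    (hy : y ∈ S.Wword v) : P1 (wordFilter hQ p (x * y)) = P1 (x * y) := by
  refine map_mul_eq_of_isFusion (f := P1 ∘ₗ wordFilter hQ p) hu hv (fun w hw z hz => ?_) hx hy
  rw [LinearMap.comp_apply]
  by_cases h : p w
  · rw [wordFilter_apply_of_pos hQ hw.1 hz h]
  · have hl : w.length ≠ 1 := by
      intro hl
      obtain ⟨i, rfl⟩ := List.length_eq_one_iff.1 hl
      exact h (hp i hw)
    rw [wordFilter_apply_of_neg hQ hw.1 hz h, map_zero, hP.apply_of_length_ne_one hw.1 hl hz]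

theorem IsP1.apply_wordFilter_mul_eq_zero (hP : S.IsP1 P1) (hQ : S.IsWordProj Q)
    (hu : S.Reduced u) (hv : S.Reduced v) (hp : ∀ i, IsFusion u v [i] → ¬ p [i])
    (hx : x ∈ S.Wword u) (hy : y ∈ S.Wword v) : P1 (wordFilter hQ p (x * y)) = 0 := by
  refine map_mul_eq_of_isFusion (f := P1 ∘ₗ wordFilter hQ p) (f' := 0) hu hv
    (fun w hw z hz => ?_) hx hy
  rw [LinearMap.comp_apply, LinearMap.zero_apply]
  by_cases h : p w
  · rw [wordFilter_apply_of_pos hQ hw.1 hz h]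
    refine hP.apply_of_length_ne_one hw.1 (fun hl => ?_) hz
    obtain ⟨i, rfl⟩ := List.length_eq_one_iff.1 hl
    exact hp i hw h
  · rw [wordFilter_apply_of_neg hQ hw.1 hz h, map_zero]

/-- The paraproduct `dag10` as a bilinear map. -/
noncomputable def dag10Bilin (hQ : S.IsWordProj Q) : S.A →ₗ[ℂ] S.A →ₗ[ℂ] S.A :=
  LinearMap.mul ℂ S.A - wordMap hQ ∘ₗ LinearMap.pi fun v =>
    LinearMap.compRight ℂ (wordFilter hQ fun w => w.getLast? = v.getLast?) ∘ₗ LinearMap.mul ℂ S.A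

/-- The paraproduct `dag01` as a bilinear map. -/
noncomputable def dag01Bilin (hQ : S.IsWordProj Q) : S.A →ₗ[ℂ] S.A →ₗ[ℂ] S.A :=
  LinearMap.mul ℂ S.A - (wordMap hQ ∘ₗ LinearMap.pi fun u =>
    LinearMap.compRight ℂ (wordFilter hQ fun w => w.head? = u.head?) ∘ₗ
      (LinearMap.mul ℂ S.A).flip).flip

/-- The paraproduct `dag11` as a bilinear map. -/
noncomputable def dag11Bilin (hQ : S.IsWordProj Q) : S.A →ₗ[ℂ] S.A →ₗ[ℂ] S.A :=
  LinearMap.mul ℂ S.A - dag10Bilin hQ - dag01Bilin hQ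

theorem dag10Bilin_apply (hQ : S.IsWordProj Q) (x y : S.A) :
    dag10Bilin hQ x y = S.dag10 Q x y := by
  classical
  exact congrArg (x * y - ·) (finsum_congr fun v => wordFilter_apply hQ _ _)

theorem dag01Bilin_apply (hQ : S.IsWordProj Q) (x y : S.A) :
    dag01Bilin hQ x y = S.dag01 Q x y := by
  classical
  exact congrArg (x * y - ·) (finsum_congr fun u => wordFilter_apply hQ _ _)

theorem dag11Bilin_apply (hQ : S.IsWordProj Q) (x y : S.A) :
    dag11Bilin hQ x y = S.dag11 Q x y := by
  rw [dag11, ← dag10Bilin_apply hQ, ← dag01Bilin_apply hQ]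
  rfl

theorem dag10Bilin_apply_of_mem (hQ : S.IsWordProj Q) (hv : S.Reduced v) (x : S.A)
    (hy : y ∈ S.Wword v) : dag10Bilin hQ x y =
      x * y - wordFilter hQ (fun w => w.getLast? = v.getLast?) (x * y) :=
  congrArg (x * y - ·) (wordMap_apply_of_mem hQ _ hv hy)

theorem dag01Bilin_apply_of_mem (hQ : S.IsWordProj Q) (hu : S.Reduced u) (hx : x ∈ S.Wword u)
    (y : S.A) : dag01Bilin hQ x y =
      x * y - wordFilter hQ (fun w => w.head? = u.head?) (x * y) :=
  congrArg (x * y - ·) (wordMap_apply_of_mem hQ _ hu hx)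

theorem IsP1.apply_dag10Bilin_of_length_le (hP : S.IsP1 P1) (hQ : S.IsWordProj Q) (hu : S.Reduced u)
    (hv : S.Reduced v) (hl : u.length ≤ v.length) (hx : x ∈ S.Wword u) (hy : y ∈ S.Wword v) :
    P1 (dag10Bilin hQ x y) = 0 := by
  rw [dag10Bilin_apply_of_mem hQ hv x hy, map_sub, hP.apply_wordFilter_mul hQ hu hv
    (fun i h => h.getLast?_eq hl (List.cons_ne_nil i [])) hx hy, sub_self]

theorem IsP1.apply_dag10Bilin_of_length_lt (hP : S.IsP1 P1) (hQ : S.IsWordProj Q) (hu : S.Reduced u)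
    (hv : S.Reduced v) (hl : v.length < u.length) (hx : x ∈ S.Wword u) (hy : y ∈ S.Wword v) :
    P1 (dag10Bilin hQ x y) = P1 (x * y) := by
  rw [dag10Bilin_apply_of_mem hQ hv x hy, map_sub, hP.apply_wordFilter_mul_eq_zero hQ hu hv
    (fun i h => (h.getLast?_ne hu hl).symm) hx hy, sub_zero]

theorem IsP1.apply_dag01Bilin_of_length_le (hP : S.IsP1 P1) (hQ : S.IsWordProj Q) (hu : S.Reduced u)
    (hv : S.Reduced v) (hl : v.length ≤ u.length) (hx : x ∈ S.Wword u) (hy : y ∈ S.Wword v) :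
    P1 (dag01Bilin hQ x y) = 0 := by
  rw [dag01Bilin_apply_of_mem hQ hu hx y, map_sub, hP.apply_wordFilter_mul hQ hu hv
    (fun i h => h.head?_eq hl (List.cons_ne_nil i [])) hx hy, sub_self]

theorem IsP1.apply_dag01Bilin_of_length_lt (hP : S.IsP1 P1) (hQ : S.IsWordProj Q) (hu : S.Reduced u)
    (hv : S.Reduced v) (hl : u.length < v.length) (hx : x ∈ S.Wword u) (hy : y ∈ S.Wword v) :
    P1 (dag01Bilin hQ x y) = P1 (x * y) := by
  rw [dag01Bilin_apply_of_mem hQ hu hx y, map_sub, hP.apply_wordFilter_mul_eq_zero hQ hu hv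
    (fun i h => (h.head?_ne hv hl).symm) hx hy, sub_zero]

theorem dag11Bilin_eq_sub (hQ : S.IsWordProj Q) (x y : S.A) : dag11Bilin hQ x y =
    x * y - dag10Bilin hQ x y - dag01Bilin hQ x y := rfl

theorem IsTpi.cotlar_identity_of_mem_Wword {P : S.RepFamily} {T : S.A →ₗ[ℂ] S.A} (hT : S.IsTpi P T)
    (hP : S.IsP1 P1) (hQ : S.IsWordProj Q) (hu : S.Reduced u) (hv : S.Reduced v)
    (hx : x ∈ S.Wword u) (hy : y ∈ S.Wword v) :
    P1 (T x * S.opConj T y) = T (P1 (dag10Bilin hQ x (S.opConj T y))) +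
      S.opConj T (P1 (dag01Bilin hQ (T x) y)) + T (P1 (dag11Bilin hQ x y)) := by
  have hTx := hT.mem_Wword hu hx
  have hTy := hT.opConj_mem_Wword hv hy
  rw [dag11Bilin_eq_sub, map_sub P1, map_sub P1]
  rcases lt_trichotomy u.length v.length with hl | hl | hl
  · rw [hP.apply_dag10Bilin_of_length_le hQ hu hv hl.le hx hTy,
      hP.apply_dag10Bilin_of_length_le hQ hu hv hl.le hx hy,
      hP.apply_dag01Bilin_of_length_lt hQ hu hv hl hTx hy,
      hP.apply_dag01Bilin_of_length_lt hQ hu hv hl hx hy,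
      ← hT.opConj_mul_of_length_lt hu hv hl hTx hy,
      hP.apply_comm fun w hw z hz => hT.opConj_mem_Wword hw hz]
    simp
  · rw [hP.apply_dag10Bilin_of_length_le hQ hu hv hl.le hx hTy,
      hP.apply_dag10Bilin_of_length_le hQ hu hv hl.le hx hy,
      hP.apply_dag01Bilin_of_length_le hQ hu hv hl.ge hTx hy,
      hP.apply_dag01Bilin_of_length_le hQ hu hv hl.ge hx hy,
      hT.P1_mul_of_length_eq hP hu hv hl hx hy,
      hP.apply_comm fun w hw z hz => hT.mem_Wword hw hz]
    simp
  · rw [hP.apply_dag10Bilin_of_length_lt hQ hu hv hl hx hTy,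
      hP.apply_dag10Bilin_of_length_lt hQ hu hv hl hx hy,
      hP.apply_dag01Bilin_of_length_le hQ hu hv hl.le hTx hy,
      hP.apply_dag01Bilin_of_length_le hQ hu hv hl.le hx hy,
      ← hT.apply_mul_of_length_lt hu hv hl hx hTy,
      hP.apply_comm fun w hw z hz => hT.mem_Wword hw hz]
    simp

end Paraproducts

end AmalgSetting

open AmalgSetting in
/-- Lemma `cotlarle2`: for all `g, h ∈ W`,
`P_1(T_π(g) T_π^op(h)) = T_π[P_1(g †^{1,0} T_π^op(h))] + T_π^op[P_1(T_π(g) †^{0,1} h)]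
+ T_π[P_1(g †^{1,1} h)]`. -/
theorem length_one_cotlar_identity (S : AmalgSetting) (P : S.RepFamily)
    (Tpi : S.A →ₗ[ℂ] S.A) (hT : S.IsTpi P Tpi)
    (P1 : S.A →ₗ[ℂ] S.A) (hP : S.IsP1 P1)
    (Q : List S.I → S.A →ₗ[ℂ] S.A) (hQ : S.IsWordProj Q)
    (g h : S.A) :
    P1 (Tpi g * S.opConj Tpi h) =
      Tpi (P1 (S.dag10 Q g (S.opConj Tpi h))) +
      S.opConj Tpi (P1 (S.dag01 Q (Tpi g) h)) +
      Tpi (P1 (S.dag11 Q g h)) := by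
  let lhs : S.A →ₗ[ℂ] S.A →ₗ[ℂ] S.A :=
    ((LinearMap.mul ℂ S.A).compl₁₂ Tpi (S.opConj Tpi)).compr₂ P1
  let rhs : S.A →ₗ[ℂ] S.A →ₗ[ℂ] S.A :=
    ((dag10Bilin hQ).compl₂ (S.opConj Tpi)).compr₂ (Tpi ∘ₗ P1) +
      (dag01Bilin hQ ∘ₗ Tpi).compr₂ (S.opConj Tpi ∘ₗ P1) + (dag11Bilin hQ).compr₂ (Tpi ∘ₗ P1)
  have heq : lhs = rhs :=
    ext_Wword₂ fun u v hu hv x hx y hy => hT.cotlar_identity_of_mem_Wword hP hQ hu hv hx hy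
  rw [← dag10Bilin_apply hQ, ← dag01Bilin_apply hQ, ← dag11Bilin_apply hQ]
  exact LinearMap.congr_fun₂ heq g h
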